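/- Let P be a probability measure on R^d absolutely continuous with respect to Lebesgue measure. If (C_n) is a sequence of compact convex subsets of R^d converging to a compact convex set C in the Hausdorff metric, then P(C_n △ C) → 0, i.e., convergence in the Hausdorff metric implies convergence in the symmetric difference pseudometric d_P(A,B) = P(A △ B) on compact convex sets. -/

import Mathlib

open MeasureTheory

/-!
If two sets `A`, `B` are at Hausdorff distance less than `δ` and `A` is convex, then `A ∆ B` lies in
the `δ`-thickening of the boundary of `B`. A point of `A \ B` is `δ`-close to `B`, so its `δ`-ball
crosses the boundary. A point `x` of `B \ A` whose `δ`-ball missed the boundary would have that ball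
inside `B`; but a hyperplane separating `x` from `A` exhibits a point of the ball whose distance to
`A` is almost `δ`. The measures of these thickenings decrease to the measure of the boundary of `B`,
which for convex `B` is Lebesgue null.
-/

open Metric Set Filter Topology

lemma subset_thickening_of_hausdorffEDist_lt {X : Type*} [PseudoEMetricSpace X] {A B : Set X}
    {δ : ℝ} (h : hausdorffEDist A B < ENNReal.ofReal δ) : A ⊆ thickening δ B := fun _ hx =>
  (infEDist_le_hausdorffEDist_of_mem hx).trans_lt h

lemma inter_frontier_nonempty_of_isPreconnected {X : Type*} [TopologicalSpace X] {s t : Set X}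
    (ht : IsPreconnected t) (hts : (t ∩ s).Nonempty) (hts' : (t ∩ sᶜ).Nonempty) :
    (t ∩ frontier s).Nonempty := by
  by_contra! h
  have hmem : ∀ x ∈ t, x ∈ interior s ∨ x ∈ interior sᶜ := fun x hx => by
    by_contra! hx'
    refine eq_empty_iff_forall_notMem.1 h x ⟨hx, ?_⟩
    rw [frontier_eq_inter_compl_interior]
    exact hx'
  obtain ⟨x, hxt, hxs⟩ := hts
  obtain ⟨y, hyt, hys⟩ := hts'
  have hx : x ∈ interior s := (hmem x hxt).resolve_right fun hx => interior_subset hx hxs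
  have hy : y ∈ interior sᶜ := (hmem y hyt).resolve_left fun hy => hys (interior_subset hy)
  obtain ⟨z, -, hzs, hzs'⟩ :=
    ht _ _ isOpen_interior isOpen_interior hmem ⟨x, hxt, hx⟩ ⟨y, hyt, hy⟩
  exact interior_subset hzs' (interior_subset hzs)

section NormedSpace

variable {E : Type*} [NormedAddCommGroup E] [NormedSpace ℝ E] {A B : Set E} {x : E} {r s δ : ℝ}

lemma mem_thickening_frontier_of_notMem (hxB : x ∉ B) (hx : x ∈ thickening δ B) :
    x ∈ thickening δ (frontier B) := by
  obtain ⟨y, hyB, hxy⟩ := mem_thickening_iff.1 hx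
  have hxδ : x ∈ ball x δ := mem_ball_self (dist_nonneg.trans_lt hxy)
  obtain ⟨z, hzx, hzB⟩ := inter_frontier_nonempty_of_isPreconnected
    (convex_ball x δ).isPreconnected ⟨y, mem_ball'.2 hxy, hyB⟩ ⟨x, hxδ, hxB⟩
  exact mem_thickening_iff.2 ⟨z, hzB, mem_ball'.1 hzx⟩

lemma mul_norm_le_of_forall_mem_ball_apply_le {f : E →L[ℝ] ℝ} {c : ℝ} (hr : 0 < r)
    (hf : ∀ v ∈ ball (0 : E) r, f v ≤ c) : r * ‖f‖ ≤ c := by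
  by_contra! hc
  obtain ⟨v, hv, hfv⟩ := f.exists_lt_apply_of_lt_opNorm ((div_lt_iff₀' hr).2 hc)
  have hball : ∀ w : E, ‖w‖ < 1 → r * f w ≤ c := fun w hw => by
    have hrw : r • w ∈ ball (0 : E) r := by
      rw [mem_ball_zero_iff, norm_smul, Real.norm_of_nonneg hr.le]
      exact mul_lt_of_lt_one_right hr hw
    simpa using hf _ hrw
  have habs : r * |f v| ≤ c := by
    rcases abs_choice (f v) with h | h <;> rw [h]
    · exact hball v hv
    · simpa using hball (-v) (by rwa [norm_neg])
  exact ((div_lt_iff₀' hr).1 hfv).not_ge habs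

lemma mem_closure_of_ball_subset_thickening (hA : Convex ℝ A) (hr : 0 < r)
    (h : ball x r ⊆ thickening r A) : x ∈ closure A := by
  by_contra hx
  obtain ⟨f, u, hfA, hfx⟩ := geometric_hahn_banach_closed_point hA.closure isClosed_closure hx
  have hf : ∀ v ∈ ball (0 : E) r, f v ≤ r * ‖f‖ - (f x - u) := fun v hv => by
    have hxv : x + v ∈ ball x r := by simpa using hv
    obtain ⟨a, ha, hdist⟩ := mem_thickening_iff.1 (h hxv)
    have hsub : f (x + v - a) ≤ r * ‖f‖ :=
      calc f (x + v - a) ≤ ‖f‖ * ‖x + v - a‖ := (le_abs_self _).trans (f.le_opNorm _)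
        _ ≤ r * ‖f‖ := by
          rw [mul_comm, ← dist_eq_norm]
          gcongr
    rw [map_sub, map_add] at hsub
    linarith [hfA a (subset_closure ha)]
  linarith [mul_norm_le_of_forall_mem_ball_apply_le hr hf]

lemma mem_interior_closure_of_ball_subset_thickening (hA : Convex ℝ A) (hs : 0 < s) (hsr : s < r)
    (h : ball x r ⊆ thickening s A) : x ∈ interior (closure A) := by
  refine mem_interior.2 ⟨ball x (r - s), fun y hy => ?_, isOpen_ball, mem_ball_self (sub_pos.2 hsr)⟩
  exact mem_closure_of_ball_subset_thickening hA hs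
    ((ball_subset_ball' (by linarith [mem_ball.1 hy])).trans h)

end NormedSpace

section FiniteDimensional

variable {E : Type*} [NormedAddCommGroup E] [NormedSpace ℝ E] [FiniteDimensional ℝ E]
  {A B : Set E} {x : E} {δ : ℝ}

lemma interior_closure_eq_interior_of_convex (hA : Convex ℝ A) :
    interior (closure A) = interior A := by
  refine Subset.antisymm (fun x hx => ?_) (interior_mono subset_closure)
  have hspan_closure : affineSpan ℝ (closure A) = ⊤ :=
    hA.closure.interior_nonempty_iff_affineSpan_eq_top.1 ⟨x, hx⟩
  have hspan : affineSpan ℝ A = ⊤ := top_le_iff.1 <| hspan_closure ▸ affineSpan_le.2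
    (closure_minimal (subset_affineSpan ℝ A) (affineSpan ℝ A).closed_of_finiteDimensional)
  have hne : (interior A).Nonempty := hA.interior_nonempty_iff_affineSpan_eq_top.2 hspan
  rwa [hA.interior_closure_eq_interior_of_nonempty_interior hne] at hx

lemma mem_of_ball_subset_of_hausdorffEDist_lt (hA : Convex ℝ A)
    (h : hausdorffEDist A B < ENNReal.ofReal δ) (hball : ball x δ ⊆ B) : x ∈ A := by
  obtain ⟨s, -, hs, hsδ⟩ := ENNReal.lt_iff_exists_real_btwn.1 h
  have hs_pos : 0 < s := ENNReal.ofReal_pos.1 (bot_le.trans_lt hs)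
  have hBA : B ⊆ thickening s A :=
    subset_thickening_of_hausdorffEDist_lt (hausdorffEDist_comm.trans_lt hs)
  have hx : x ∈ interior (closure A) := mem_interior_closure_of_ball_subset_thickening hA hs_pos
    (ENNReal.ofReal_lt_ofReal_iff'.1 hsδ).1 (hball.trans hBA)
  rw [interior_closure_eq_interior_of_convex hA] at hx
  exact interior_subset hx

lemma symmDiff_subset_thickening_frontier (hA : Convex ℝ A)
    (h : hausdorffEDist A B < ENNReal.ofReal δ) :
    symmDiff A B ⊆ thickening δ (frontier B) := by
  rintro x (⟨hxA, hxB⟩ | ⟨hxB, hxA⟩)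
  · exact mem_thickening_frontier_of_notMem hxB (subset_thickening_of_hausdorffEDist_lt h hxA)
  · rw [← frontier_compl]
    refine mem_thickening_frontier_of_notMem (notMem_compl_iff.2 hxB) ?_
    by_contra hx
    have hball : ball x δ ⊆ B := fun y hy => by
      by_contra hyB
      exact hx (mem_thickening_iff.2 ⟨y, hyB, mem_ball'.1 hy⟩)
    exact hxA (mem_of_ball_subset_of_hausdorffEDist_lt hA h hball)

end FiniteDimensional

theorem stmt13_general {E ι : Type*} [NormedAddCommGroup E] [NormedSpace ℝ E]
    [FiniteDimensional ℝ E] [MeasurableSpace E] [OpensMeasurableSpace E] {P : Measure E}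
    [IsFiniteMeasure P] {l : Filter ι} {C : ι → Set E} {K : Set E} (hC : ∀ i, Convex ℝ (C i))
    (hK : P (frontier K) = 0) (h : Tendsto (fun i => hausdorffEDist (C i) K) l (𝓝 0)) :
    Tendsto (fun i => P (symmDiff (C i) K)) l (𝓝 0) := by
  have hthick : Tendsto (fun δ => P (thickening δ (frontier K))) (𝓝[>] 0) (𝓝 0) := by
    simpa only [isClosed_frontier.closure_eq, hK] using
      tendsto_measure_thickening (μ := P) (s := frontier K) ⟨1, one_pos, measure_ne_top _ _⟩
  refine ENNReal.tendsto_nhds_zero.2 fun ε hε => ?_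
  obtain ⟨δ, hPδ, hδ⟩ :=
    ((ENNReal.tendsto_nhds_zero.1 hthick ε hε).and self_mem_nhdsWithin).exists
  filter_upwards [h.eventually_lt_const (ENNReal.ofReal_pos.2 hδ)] with i hi
  exact (measure_mono (symmDiff_subset_thickening_frontier (hC i) hi)).trans hPδ

/-- for `P` absolutely continuous w.r.t. Lebesgue measure on
`ℝ^d`, Hausdorff-metric convergence of nonempty compact convex sets implies
convergence in the symmetric-difference pseudometric `d_P(A,B) = P(A △ B)`. -/
theorem stmt13 {d : ℕ} (P : Measure (EuclideanSpace ℝ (Fin d)))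
    [IsProbabilityMeasure P] (hac : P ≪ (volume : Measure (EuclideanSpace ℝ (Fin d))))
    (C : ℕ → Set (EuclideanSpace ℝ (Fin d))) (Clim : Set (EuclideanSpace ℝ (Fin d)))
    (hCcpt : ∀ n, IsCompact (C n)) (hCcvx : ∀ n, Convex ℝ (C n))
    (hCne : ∀ n, (C n).Nonempty)
    (hcpt : IsCompact Clim) (hcvx : Convex ℝ Clim) (hne : Clim.Nonempty)
    (hH : Filter.Tendsto (fun n => Metric.hausdorffDist (C n) Clim)
      Filter.atTop (nhds 0)) :
    Filter.Tendsto (fun n => P (symmDiff (C n) Clim)) Filter.atTop (nhds 0) := by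
  have hfin : ∀ n, hausdorffEDist (C n) Clim ≠ ⊤ := fun n =>
    hausdorffEDist_ne_top_of_nonempty_of_bounded (hCne n) hne (hCcpt n).isBounded hcpt.isBounded
  exact stmt13_general hCcvx (hac (hcvx.addHaar_frontier volume))
    ((ENNReal.tendsto_toReal_iff hfin ENNReal.zero_ne_top).1 hH)
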